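/- Let f : (0,∞) → (0,∞) be operator monotone, symmetric (f(x) = x·f(1/x) for all x > 0), normalized (f(1) = 1), and regular, i.e. f(0) := lim_{x→0+} f(x) exists and f(0) ≠ 0. Define f̃(x) := ½[ (x+1) − (x−1)²·f(0)/f(x) ] for x > 0. Then f̃ is operator monotone on (0,∞), symmetric (f̃(x) = x·f̃(1/x)), normalized (f̃(1) = 1), and non-regular: lim_{x→0+} f̃(x) = 0. -/

import Mathlib

open Matrix
open scoped ComplexOrder

/-- A function `f : ℝ → ℝ` is operator monotone on `(0,∞)` if for every `n` and all
positive-definite (Hermitian) complex `n×n` matrices `A, B` with `B − A` positive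
semidefinite, the matrix `f(B) − f(A)` is positive semidefinite, where `f` is applied
through the functional calculus for Hermitian matrices (on the eigenvalues). -/
def OperatorMonotoneOn (f : ℝ → ℝ) : Prop :=
  ∀ (n : ℕ) (A B : Matrix (Fin n) (Fin n) ℂ) (hA : A.PosDef) (hB : B.PosDef),
    (B - A).PosSemidef → ((hB.1.cfc f) - (hA.1.cfc f)).PosSemidef


namespace FT

variable {m n : Type} [Fintype m] [Fintype n] [DecidableEq m] [DecidableEq n]

lemma contS (A : Matrix n n ℂ) (f : ℝ → ℝ) : ContinuousOn f (spectrum ℝ A) := by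
  rw [continuousOn_iff_continuous_domRestrict]; fun_prop

lemma contI (A : Matrix n n ℂ) (g f : ℝ → ℝ) : ContinuousOn f (g '' spectrum ℝ A) := by
  have : (g '' spectrum ℝ A).Finite := (Set.toFinite _).image _
  have := this.to_subtype
  rw [continuousOn_iff_continuous_domRestrict]; fun_prop

lemma spec_pos {A : Matrix n n ℂ} (hA : A.PosDef) {x : ℝ} (hx : x ∈ spectrum ℝ A) : 0 < x := by
  rw [hA.1.spectrum_real_eq_range_eigenvalues] at hx
  obtain ⟨i, rfl⟩ := hx
  exact hA.eigenvalues_pos i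

lemma cfc_herm (A : Matrix n n ℂ) (f : ℝ → ℝ) : (cfc f A).IsHermitian :=
  cfc_predicate f A

lemma cfc_posDef {A : Matrix n n ℂ} (hA : A.PosDef) {f : ℝ → ℝ} (hf : ∀ x, 0 < x → 0 < f x) :
    (cfc f A).PosDef := by
  rw [(cfc_herm A f).posDef_iff_eigenvalues_pos]
  intro i
  have h := (cfc_herm A f).eigenvalues_mem_spectrum_real i
  rw [cfc_map_spectrum f A hA.1.isSelfAdjoint (contS A f)] at h
  obtain ⟨x, hx, hxe⟩ := h
  rw [← hxe]; exact hf x (spec_pos hA hx)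

lemma intertwine {A : Matrix n n ℂ} {B : Matrix m m ℂ} (hA : A.IsHermitian) (hB : B.IsHermitian)
    (X : Matrix m n ℂ) (h : X * A = B * X) (f : ℝ → ℝ) : X * cfc f A = cfc f B * X := by
  rw [hA.cfc_eq, hB.cfc_eq, Matrix.IsHermitian.cfc, Matrix.IsHermitian.cfc]
  have h1 := hA.spectral_theorem
  have h2 := hB.spectral_theorem
  rw [Unitary.conjStarAlgAut_apply] at h1 h2 ⊢
  rw [Unitary.conjStarAlgAut_apply]
  set U : Matrix n n ℂ := (hA.eigenvectorUnitary : Matrix n n ℂ) with hU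
  set W : Matrix m m ℂ := (hB.eigenvectorUnitary : Matrix m m ℂ) with hW
  have hU1 : star U * U = 1 := Unitary.coe_star_mul_self hA.eigenvectorUnitary
  have hU2 : U * star U = 1 := Unitary.coe_mul_star_self hA.eigenvectorUnitary
  have hW1 : star W * W = 1 := Unitary.coe_star_mul_self hB.eigenvectorUnitary
  have hW2 : W * star W = 1 := Unitary.coe_mul_star_self hB.eigenvectorUnitary
  set a := hA.eigenvalues with ha
  set b := hB.eigenvalues with hb
  have hfa : (RCLike.ofReal ∘ f ∘ a : n → ℂ) = fun i => (f (a i) : ℂ) := rfl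
  have hfb : (RCLike.ofReal ∘ f ∘ b : m → ℂ) = fun i => (f (b i) : ℂ) := rfl
  rw [hfa, hfb]
  obtain ⟨D1, hD1⟩ : ∃ D : Matrix n n ℂ, D = diagonal (RCLike.ofReal ∘ a) := ⟨_, rfl⟩
  obtain ⟨D2, hD2⟩ : ∃ D : Matrix m m ℂ, D = diagonal (RCLike.ofReal ∘ b) := ⟨_, rfl⟩
  obtain ⟨F1, hF1⟩ : ∃ D : Matrix n n ℂ, D = diagonal (fun i => (f (a i) : ℂ)) := ⟨_, rfl⟩
  obtain ⟨F2, hF2⟩ : ∃ D : Matrix m m ℂ, D = diagonal (fun i => (f (b i) : ℂ)) := ⟨_, rfl⟩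
  rw [← hD1] at h1
  rw [← hD2] at h2
  rw [← hF1, ← hF2]
  obtain ⟨Y, hY⟩ : ∃ Y : Matrix m n ℂ, Y = star W * X * U := ⟨_, rfl⟩
  have key : Y * D1 = D2 * Y := by
    have e1 : Y * D1 = star W * (X * (U * D1 * star U)) * U := by
      rw [hY]; simp only [Matrix.mul_assoc, hU1, Matrix.mul_one]
    have e2 : star W * ((W * D2 * star W) * X) * U = (star W * W) * (D2 * Y) := by
      rw [hY]; simp only [Matrix.mul_assoc]
    rw [e1, ← h1, h]
    rw [← h2, hW1, Matrix.one_mul] at e2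
    exact e2
  have key2 : Y * F1 = F2 * Y := by
    ext i j
    have := congrFun (congrFun key i) j
    rw [hD1, hD2, mul_diagonal, diagonal_mul] at this
    rw [hF1, hF2, mul_diagonal, diagonal_mul]
    simp only [Function.comp_apply] at this
    by_cases hz : Y i j = 0
    · simp [hz]
    · rw [mul_comm] at this
      have := mul_right_cancel₀ hz this
      rw [RCLike.ofReal_inj] at this
      rw [this, mul_comm]
  have e1 : X * (U * F1 * star U) = (W * star W) * (X * (U * F1 * star U)) := by
    rw [hW2, Matrix.one_mul]
  have e2 : (W * star W) * (X * (U * F1 * star U)) = W * (Y * F1) * star U := by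
    rw [hY]; simp only [Matrix.mul_assoc]
  have e3 : W * (F2 * Y) * star U = W * F2 * star W * X * (U * star U) := by
    rw [hY]; simp only [Matrix.mul_assoc]
  rw [e1, e2, key2, e3, hU2, Matrix.mul_one]

lemma inv_anti {A B : Matrix n n ℂ} (hA : A.PosDef) (hB : B.PosDef) (h : (B - A).PosSemidef) :
    (A⁻¹ - B⁻¹).PosSemidef := by
  have := hB.isUnit.invertible
  have := hA.inv.isUnit.invertible
  have h1 := Matrix.PosDef.fromBlocks₁₁ (A := B) (1 : Matrix n n ℂ) A⁻¹ hB
  have h2 := Matrix.PosDef.fromBlocks₂₂ B (1 : Matrix n n ℂ) (D := A⁻¹) hA.inv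
  have e : A⁻¹⁻¹ = A := nonsing_inv_nonsing_inv _ ((isUnit_iff_isUnit_det _).1 hA.isUnit)
  simp only [conjTranspose_one, Matrix.one_mul, Matrix.mul_one, e] at h1 h2
  exact h1.1 (h2.2 h)

lemma exists_le {R : Matrix n n ℂ} (hR : R.IsHermitian) :
    ∃ l : ℝ, (l • (1 : Matrix n n ℂ) - R).PosSemidef := by
  obtain ⟨l, hl⟩ := (Set.toFinite (spectrum ℝ R)).bddAbove
  refine ⟨l, ?_⟩
  have e : l • (1 : Matrix n n ℂ) - R = cfc (fun x => l - x) R := by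
    rw [cfc_sub (fun _ => l) (fun x => x) R, cfc_const l R hR.isSelfAdjoint, cfc_id' ℝ R hR.isSelfAdjoint,
      Algebra.algebraMap_eq_smul_one]
  rw [e, (cfc_herm R _).posSemidef_iff_eigenvalues_nonneg]
  intro i
  have h := (cfc_herm R (fun x => l - x)).eigenvalues_mem_spectrum_real i
  rw [cfc_map_spectrum _ R hR.isSelfAdjoint (contS R _)] at h
  obtain ⟨x, hx, hxe⟩ := h
  rw [← hxe]; exact sub_nonneg.2 (hl hx)

lemma exists_ge {R : Matrix n n ℂ} (hR : R.PosDef) :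
    ∃ a : ℝ, 0 < a ∧ (R - a • (1 : Matrix n n ℂ)).PosSemidef := by
  obtain ⟨l, hl⟩ := exists_le hR.inv.1
  have hl' : ((max l 1) • (1 : Matrix n n ℂ) - R⁻¹).PosSemidef := by
    have : (max l 1) • (1 : Matrix n n ℂ) - R⁻¹ = (l • (1 : Matrix n n ℂ) - R⁻¹)
      + (max l 1 - l) • (1 : Matrix n n ℂ) := by module
    rw [this]
    exact hl.add (PosSemidef.one.smul (sub_nonneg.2 (le_max_left _ _)))
  have hp : 0 < max l 1 := lt_max_of_lt_right one_pos
  have h := inv_anti hR.inv (PosDef.one.smul hp) hl'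
  have e : R⁻¹⁻¹ = R := nonsing_inv_nonsing_inv _ ((isUnit_iff_isUnit_det _).1 hR.isUnit)
  refine ⟨(max l 1)⁻¹, inv_pos.2 hp, ?_⟩
  have e2 : ((max l 1) • (1 : Matrix n n ℂ))⁻¹ = (max l 1)⁻¹ • (1 : Matrix n n ℂ) := by
    apply inv_eq_right_inv
    rw [smul_mul_smul_comm, mul_inv_cancel₀ hp.ne', Matrix.one_mul, one_smul]
  rwa [e, e2] at h

lemma dom {P M : Matrix n n ℂ} (hP : P.IsHermitian) (hPP : P * P = P) (hM : M.IsHermitian)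
    {ε : ℝ} (hε : 0 < ε) :
    ∃ l : ℝ, (ε • P + l • (1 - P) + P * M * P - M).PosSemidef := by
  have hR : (ε⁻¹ • (M * P * M) + M).IsHermitian := by
    unfold Matrix.IsHermitian
    simp only [conjTranspose_add, conjTranspose_smul, conjTranspose_mul, hP.eq, hM.eq, star_trivial,
      Matrix.mul_assoc]
  obtain ⟨l, hl⟩ := exists_le hR
  refine ⟨l, ?_⟩
  have h1 := hl.conjTranspose_mul_mul_same (1 - P)
  have h2 := (posSemidef_self_mul_conjTranspose (ε • P - (1 - P) * M * P)).smul (inv_nonneg.2 hε.le)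
  convert h2.add h1 using 1
  have hPP' : ∀ X, P * (P * X) = P * X := fun X => by rw [← Matrix.mul_assoc, hPP]
  simp only [conjTranspose_sub, conjTranspose_smul, conjTranspose_mul, hP.eq, hM.eq, star_trivial,
    conjTranspose_one, mul_sub, sub_mul, mul_add, add_mul, smul_sub, smul_mul_assoc,
    mul_smul_comm, mul_assoc, mul_one, one_mul, hPP, hPP', smul_smul, inv_mul_cancel₀ hε.ne',
    inv_mul_cancel_left₀ hε.ne', one_smul]
  module

lemma gen {v : ℝ → ℝ} (hv : OperatorMonotoneOn v) {A B : Matrix n n ℂ} (hA : A.PosDef)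
    (hB : B.PosDef) (h : (B - A).PosSemidef) : (cfc v B - cfc v A).PosSemidef := by
  let e := Fintype.equivFin n
  let X : Matrix (Fin (Fintype.card n)) n ℂ := (1 : Matrix n n ℂ).submatrix e.symm id
  have hX : ∀ A : Matrix n n ℂ, X * A * Xᴴ = A.submatrix e.symm e.symm := by
    intro A
    simp only [X, conjTranspose_submatrix, conjTranspose_one]
    ext i j
    simp [Matrix.mul_apply, Matrix.one_apply]
  have hXX : Xᴴ * X = 1 := by
    ext i j
    simp only [X, conjTranspose_submatrix, conjTranspose_one, Matrix.submatrix_mul_equiv]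
    simp [Matrix.one_apply]
  have pd : ∀ A : Matrix n n ℂ, A.PosDef → (X * A * Xᴴ).PosDef := fun A hA => by
    rw [hX]; exact hA.submatrix e.symm.injective
  have hc : ∀ A : Matrix n n ℂ, A.PosDef → cfc v A = Xᴴ * cfc v (X * A * Xᴴ) * X := fun A hA => by
    have := intertwine hA.1 (pd A hA).1 X (by rw [Matrix.mul_assoc, hXX, Matrix.mul_one]) v
    rw [Matrix.mul_assoc, ← this, ← Matrix.mul_assoc, hXX, Matrix.one_mul]
  have := hv _ _ _ (pd A hA) (pd B hB) (by
    have := h.mul_mul_conjTranspose_same X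
    rwa [Matrix.mul_sub, Matrix.sub_mul] at this)
  rw [← (pd A hA).1.cfc_eq, ← (pd B hB).1.cfc_eq] at this
  have := this.conjTranspose_mul_mul_same X
  rwa [Matrix.mul_sub, Matrix.sub_mul, ← hc A hA, ← hc B hB] at this

lemma core {v : ℝ → ℝ} (hv : OperatorMonotoneOn v) {A : Matrix n n ℂ} (hA : A.IsHermitian)
    {M : Matrix m m ℂ} (hM : M.PosDef) (V : Matrix m n ℂ) (hV : Vᴴ * V = 1) {ε : ℝ} (hε : 0 < ε)
    (h : (A - ε • 1 - Vᴴ * M * V).PosSemidef) : (cfc v A - Vᴴ * cfc v M * V).PosSemidef := by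
  have hP : (V * Vᴴ).IsHermitian := isHermitian_mul_conjTranspose_self V
  have hPP : (V * Vᴴ) * (V * Vᴴ) = V * Vᴴ := by
    rw [Matrix.mul_assoc, ← Matrix.mul_assoc Vᴴ, hV, Matrix.one_mul]
  obtain ⟨l, hl⟩ := dom hP hPP hM.1 hε
  have hNM : ((V * A * Vᴴ + l • (1 - V * Vᴴ)) - M).PosSemidef := by
    convert hl.add (h.mul_mul_conjTranspose_same V) using 1
    simp only [Matrix.mul_sub, Matrix.sub_mul, Matrix.mul_smul, Matrix.smul_mul, Matrix.mul_one,
      Matrix.mul_assoc]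
    module
  have hN : (V * A * Vᴴ + l • (1 - V * Vᴴ)).PosDef := by
    have := hM.add_posSemidef hNM
    rwa [add_sub_cancel] at this
  have h1 := (gen hv hM hN hNM).conjTranspose_mul_mul_same V
  have h2 := intertwine hA hN.1 V (by
    simp only [Matrix.add_mul, Matrix.sub_mul, Matrix.smul_mul, Matrix.mul_assoc, hV,
      Matrix.mul_one, Matrix.one_mul]
    simp) v
  rwa [Matrix.mul_sub, Matrix.sub_mul, Matrix.mul_assoc Vᴴ _ V, ← h2, ← Matrix.mul_assoc, hV,
    Matrix.one_mul] at h1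

lemma cfc_smul_one (v : ℝ → ℝ) (δ : ℝ) : cfc v (δ • (1 : Matrix n n ℂ)) = v δ • 1 := by
  have := cfc_algebraMap (A := Matrix n n ℂ) δ v
  rwa [Algebra.algebraMap_eq_smul_one, Algebra.algebraMap_eq_smul_one] at this

lemma cfc_blocks (v : ℝ → ℝ) {B : Matrix n n ℂ} (hB : B.IsHermitian) (δ : ℝ) :
    cfc v (fromBlocks B 0 0 (δ • (1 : Matrix n n ℂ))) = fromBlocks (cfc v B) 0 0 (v δ • 1) := by
  have h1 : (δ • (1 : Matrix n n ℂ)).IsHermitian := by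
    simp [Matrix.IsHermitian]
  have hM : (fromBlocks B 0 0 (δ • (1 : Matrix n n ℂ))).IsHermitian :=
    hB.fromBlocks (by simp) h1
  have e1 := intertwine hB hM (fromRows 1 0)
    (by rw [fromBlocks_mul_fromRows, fromRows_mul]; simp) v
  have e2 := intertwine h1 hM (fromRows 0 1)
    (by rw [fromBlocks_mul_fromRows, fromRows_mul]; simp) v
  rw [cfc_smul_one] at e2
  obtain ⟨a, b, c, d, hZ⟩ : ∃ a b c d, cfc v (fromBlocks B 0 0 (δ • (1 : Matrix n n ℂ)))
      = fromBlocks a b c d := ⟨_, _, _, _, (fromBlocks_toBlocks _).symm⟩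
  rw [hZ] at e1 e2 ⊢
  rw [fromBlocks_mul_fromRows, fromRows_mul, fromRows_inj.eq_iff] at e1 e2
  simp at e1 e2
  rw [← e1.1, ← e1.2, ← e2.1, ← e2.2]

lemma exists_root {K : Matrix n n ℂ} (hK : K.PosSemidef) : ∃ D : Matrix n n ℂ, K = Dᴴ * D := by
  refine ⟨cfc Real.sqrt K, ?_⟩
  have hh : (cfc Real.sqrt K)ᴴ = cfc Real.sqrt K := cfc_herm _ _
  rw [hh, ← cfc_mul _ _ K (contS K _) (contS K _)]
  conv_lhs => rw [← cfc_id' ℝ K hK.1.isSelfAdjoint]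
  refine cfc_congr fun x hx => ?_
  rw [hK.1.spectrum_real_eq_range_eigenvalues] at hx
  obtain ⟨i, rfl⟩ := hx
  exact (Real.mul_self_sqrt (hK.eigenvalues_nonneg i)).symm

lemma hansen {v : ℝ → ℝ} (hv : OperatorMonotoneOn v) (hv0 : ∀ x, 0 < x → 0 ≤ v x)
    {A B : Matrix n n ℂ} (hA : A.PosDef) (hB : B.PosDef) (T : Matrix n n ℂ) {t : ℝ} (ht : t < 1)
    (hT : Tᴴ * B * T = t • A) (hT1 : (1 - Tᴴ * T).PosSemidef) :
    (cfc v A - Tᴴ * cfc v B * T).PosSemidef := by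
  obtain ⟨D, hD⟩ := exists_root hT1
  obtain ⟨α, hα, hAα⟩ := exists_ge hA
  set δ : ℝ := (1 - t) * α / 2 with hδ
  have hδ0 : 0 < δ := by have := sub_pos.2 ht; positivity
  have hM : (fromBlocks B 0 0 (δ • (1 : Matrix n n ℂ))).PosDef := by
    have hp : (δ • (1 : Matrix n n ℂ)).PosDef := PosDef.one.smul hδ0
    have := hB.isUnit.invertible
    have hs : (fromBlocks B 0 0 (δ • (1 : Matrix n n ℂ))).PosSemidef := by
      have := (PosDef.fromBlocks₁₁ (A := B) (0 : Matrix n n ℂ) (δ • 1) hB).2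
        (by simpa using hp.posSemidef)
      simpa using this
    rw [hs.posDef_iff_det_ne_zero, det_fromBlocks_zero₂₁]
    exact mul_ne_zero hB.det_pos.ne' hp.det_pos.ne'
  have hc : ∀ X : Matrix n n ℂ, ∀ d : ℝ, (fromRows T D)ᴴ * fromBlocks X 0 0 (d • (1 : Matrix n n ℂ)) * fromRows T D
      = Tᴴ * X * T + d • (Dᴴ * D) := by
    intro X d
    rw [Matrix.mul_assoc, fromBlocks_mul_fromRows, conjTranspose_fromRows_eq_fromCols_conjTranspose,
      fromCols_mul_fromRows]
    simp [Matrix.mul_assoc]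
  have hV : (fromRows T D)ᴴ * fromRows T D = 1 := by
    rw [conjTranspose_fromRows_eq_fromCols_conjTranspose, fromCols_mul_fromRows, ← hD]; simp
  have := core hv hA.1 hM (fromRows T D) hV hδ0 (by
    rw [hc, hT, ← hD]
    have h1 := (hAα.smul (sub_pos.2 ht).le).add ((posSemidef_conjTranspose_mul_self T).smul hδ0.le)
    convert h1 using 1
    have : (1 - t) * α = 2 * δ := by rw [hδ]; ring
    rw [smul_sub (1 - t), smul_smul, this]
    module)
  rw [cfc_blocks v hB.1, hc] at this
  have := this.add ((posSemidef_conjTranspose_mul_self D).smul (hv0 δ hδ0))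
  convert this using 1
  abel

lemma limPSD {X Y : Matrix n n ℂ} (hX : X.IsHermitian) (hY : Y.IsHermitian)
    (h : ∀ s : ℝ, 0 < s → s < 1 → (X - (s * s) • Y).PosSemidef) : (X - Y).PosSemidef := by
  refine PosSemidef.of_dotProduct_mulVec_nonneg (hX.sub hY) fun x => ?_
  have hc : Continuous fun s : ℝ => star x ⬝ᵥ ((X - (s * s) • Y) *ᵥ x) := by fun_prop
  have ht : Filter.Tendsto (fun s : ℝ => star x ⬝ᵥ ((X - (s * s) • Y) *ᵥ x))
      (nhdsWithin 1 (Set.Iio 1)) (nhds (star x ⬝ᵥ ((X - Y) *ᵥ x))) := by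
    have := (hc.tendsto 1).mono_left (nhdsWithin_le_nhds (s := Set.Iio 1))
    simpa using this
  refine ge_of_tendsto ht ?_
  filter_upwards [Ioo_mem_nhdsLT (zero_lt_one' ℝ)] with s hs
  exact (h s hs.1 hs.2).dotProduct_mulVec_nonneg x

lemma cfc3 {A : Matrix n n ℂ} (hA : A.PosDef) {f g h k : ℝ → ℝ}
    (e : ∀ x, 0 < x → f x * g x * h x = k x) : cfc f A * cfc g A * cfc h A = cfc k A := by
  rw [← cfc_mul f g A (contS A f) (contS A g), ← cfc_mul _ h A (contS A _) (contS A h)]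
  exact cfc_congr fun x hx => e x (spec_pos hA hx)

lemma cfc2 {A : Matrix n n ℂ} (hA : A.PosDef) {f g k : ℝ → ℝ}
    (e : ∀ x, 0 < x → f x * g x = k x) : cfc f A * cfc g A = cfc k A := by
  rw [← cfc_mul f g A (contS A f) (contS A g)]
  exact cfc_congr fun x hx => e x (spec_pos hA hx)

lemma cfcid {A : Matrix n n ℂ} (hA : A.PosDef) : cfc (fun x : ℝ => x) A = A :=
  cfc_id' ℝ A hA.1.isSelfAdjoint

lemma cfcone {A : Matrix n n ℂ} (hA : A.PosDef) : cfc (fun _ : ℝ => (1 : ℝ)) A = 1 :=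
  cfc_const_one ℝ A hA.1.isSelfAdjoint

lemma cfcinv {A : Matrix n n ℂ} (hA : A.PosDef) {f : ℝ → ℝ} (hf : ∀ x, 0 < x → f x ≠ 0) :
    cfc (fun x => (f x)⁻¹) A = (cfc f A)⁻¹ := by
  symm; apply inv_eq_right_inv
  rw [cfc2 hA (k := fun _ => 1) (fun x hx => mul_inv_cancel₀ (hf x hx)), cfcone hA]

lemma hp {v : ℝ → ℝ} (hv : OperatorMonotoneOn v) (hv0 : ∀ x, 0 < x → 0 ≤ v x)
    {A B : Matrix n n ℂ} (hA : A.PosDef) (hB : B.PosDef) (h : (B - A).PosSemidef) :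
    (cfc (fun x => v x / x) A - cfc (fun x => v x / x) B).PosSemidef := by
  refine limPSD (cfc_herm _ _) (cfc_herm _ _) fun s hs0 hs1 => ?_
  set S := cfc Real.sqrt A with hS
  set Si := cfc (fun x => (Real.sqrt x)⁻¹) A with hSi
  set R := cfc (fun x => (Real.sqrt x)⁻¹) B with hR
  have hSh : Sᴴ = S := cfc_herm _ _
  have hSih : Siᴴ = Si := cfc_herm _ _
  have hRh : Rᴴ = R := cfc_herm _ _
  have q : ∀ x : ℝ, 0 < x → Real.sqrt x ≠ 0 := fun x hx => (Real.sqrt_pos.2 hx).ne'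
  have hSS : S * S = A := by
    rw [hS, cfc2 hA (fun x hx => Real.mul_self_sqrt hx.le), cfcid hA]
  have hSSi : S * Si = 1 := by
    rw [hS, hSi, cfc2 hA (fun x hx => mul_inv_cancel₀ (q x hx)), cfcone hA]
  have hSiS : Si * S = 1 := by
    rw [hS, hSi, cfc2 hA (fun x hx => inv_mul_cancel₀ (q x hx)), cfcone hA]
  have hRBR : R * B * R = 1 := by
    conv_lhs => rw [← cfcid hB]
    rw [cfcid hB, hR]
    nth_rw 2 [← cfcid hB]
    rw [cfc3 hB (k := fun _ => 1), cfcone hB]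
    intro x hx
    have := q x hx
    field_simp
    rw [Real.sq_sqrt hx.le]
  have hRR : R * R = B⁻¹ := by
    rw [hR, cfc2 hB (k := fun x => x⁻¹), cfcinv hB (f := fun x => x) (fun x hx => hx.ne'), cfcid hB]
    intro x hx
    rw [← mul_inv, Real.mul_self_sqrt hx.le]
  have hSAS : S * A⁻¹ * S = 1 := by
    have e : A⁻¹ = cfc (fun x : ℝ => x⁻¹) A := by
      rw [cfcinv hA (f := fun x => x) (fun x hx => hx.ne'), cfcid hA]
    rw [e, hS, cfc3 hA (k := fun _ => 1), cfcone hA]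
    intro x hx
    have := q x hx
    field_simp
    rw [Real.sq_sqrt hx.le]
  have hss : s * s < 1 := by nlinarith
  have key := hansen hv hv0 hA hB (s • (R * S)) hss (by
      simp only [conjTranspose_smul, conjTranspose_mul, hSh, hRh, star_trivial, smul_mul_assoc,
        mul_smul_comm, smul_smul]
      congr 1
      calc S * R * B * (R * S) = S * (R * B * R) * S := by simp only [mul_assoc]
        _ = A := by rw [hRBR, mul_one, hSS]) (by
      have h1 := ((inv_anti hA hB h).mul_mul_conjTranspose_same S).smul (mul_self_nonneg s)
      have h2 := (PosSemidef.one (n := n) (R := ℂ)).smul (sub_pos.2 hss).le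
      convert h1.add h2 using 1
      have e : S * R * (R * S) = S * B⁻¹ * S := by rw [← hRR]; simp only [mul_assoc]
      simp only [conjTranspose_smul, conjTranspose_mul, hSh, hRh, star_trivial, smul_mul_assoc,
        mul_smul_comm, smul_smul, e, mul_sub, sub_mul, hSAS]
      module)
  have key2 := key.mul_mul_conjTranspose_same Si
  convert key2 using 1
  have e1 : Si * cfc v A * Si = cfc (fun x => v x / x) A := by
    rw [hSi, cfc3 hA]
    intro x hx
    have := q x hx
    field_simp
    rw [Real.sq_sqrt hx.le, mul_comm]
  have e2 : R * cfc v B * R = cfc (fun x => v x / x) B := by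
    rw [hR, cfc3 hB]
    intro x hx
    have := q x hx
    field_simp
    rw [Real.sq_sqrt hx.le, mul_comm]
  simp only [conjTranspose_smul, conjTranspose_mul, hSh, hRh, hSih, star_trivial, smul_mul_assoc,
        mul_smul_comm, smul_smul, mul_sub, sub_mul, e1]
  congr 2
  calc cfc (fun x => v x / x) B = (Si * S) * (R * cfc v B * R) * (S * Si) := by
        rw [hSiS, hSSi, e2, one_mul, mul_one]
    _ = _ := by simp only [mul_assoc]

lemma om_iff {v : ℝ → ℝ} : OperatorMonotoneOn v ↔ ∀ (n : ℕ) (A B : Matrix (Fin n) (Fin n) ℂ),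
    A.PosDef → B.PosDef → (B - A).PosSemidef → (cfc v B - cfc v A).PosSemidef := by
  constructor
  · intro h n A B hA hB hAB
    exact gen h hA hB hAB
  · intro h n A B hA hB hAB
    rw [← hA.1.cfc_eq, ← hB.1.cfc_eq]
    exact h n A B hA hB hAB

lemma cfc_inv_comp {A : Matrix n n ℂ} (hA : A.PosDef) (g : ℝ → ℝ) :
    cfc (fun x => g x⁻¹) A = cfc g A⁻¹ := by
  rw [cfc_comp' g (fun x : ℝ => x⁻¹) A (contI A _ _) (contS A _) hA.1.isSelfAdjoint,
    cfcinv hA (f := fun x => x) (fun x hx => hx.ne'), cfcid hA]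

lemma om_add {f g : ℝ → ℝ} (hf : OperatorMonotoneOn f) (hg : OperatorMonotoneOn g) :
    OperatorMonotoneOn (fun x => f x + g x) := by
  rw [om_iff] at *
  intro n A B hA hB h
  rw [cfc_add A f g (contS _ _) (contS _ _), cfc_add B f g (contS _ _) (contS _ _),
    add_sub_add_comm]
  exact (hf n A B hA hB h).add (hg n A B hA hB h)

lemma om_smul {f : ℝ → ℝ} (hf : OperatorMonotoneOn f) {c : ℝ} (hc : 0 ≤ c) :
    OperatorMonotoneOn (fun x => c * f x) := by
  rw [om_iff] at *
  intro n A B hA hB h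
  rw [cfc_const_mul c f A (contS _ _), cfc_const_mul c f B (contS _ _), ← smul_sub]
  exact (hf n A B hA hB h).smul hc

lemma om_const (c : ℝ) : OperatorMonotoneOn (fun _ => c) := by
  rw [om_iff]
  intro n A B hA hB h
  rw [cfc_const c A hA.1.isSelfAdjoint, cfc_const c B hB.1.isSelfAdjoint, sub_self]
  exact PosSemidef.zero

lemma om_congr {f g : ℝ → ℝ} (hf : OperatorMonotoneOn f) (h : ∀ x, 0 < x → g x = f x) :
    OperatorMonotoneOn g := by
  rw [om_iff] at *
  intro n A B hA hB hAB
  rw [cfc_congr (fun x hx => h x (spec_pos hA hx)), cfc_congr (fun x hx => h x (spec_pos hB hx))]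
  exact hf n A B hA hB hAB

lemma om_neg_inv {f : ℝ → ℝ} (hf : OperatorMonotoneOn f) (hp : ∀ x, 0 < x → 0 < f x) :
    OperatorMonotoneOn (fun x => -(f x)⁻¹) := by
  rw [om_iff] at *
  intro n A B hA hB h
  rw [cfc_neg _ A, cfc_neg _ B, cfcinv hA (fun x hx => (hp x hx).ne'),
    cfcinv hB (fun x hx => (hp x hx).ne'), neg_sub_neg]
  exact inv_anti (cfc_posDef hA hp) (cfc_posDef hB hp) (hf n A B hA hB h)

lemma om_flip {g : ℝ → ℝ} (hf : OperatorMonotoneOn g) :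
    OperatorMonotoneOn (fun x => -g x⁻¹) := by
  rw [om_iff] at *
  intro n A B hA hB h
  rw [cfc_neg _ A, cfc_neg _ B, cfc_inv_comp hA, cfc_inv_comp hB, neg_sub_neg]
  exact hf n _ _ hB.inv hA.inv (inv_anti hA hB h)

lemma om_transpose {v : ℝ → ℝ} (hv : OperatorMonotoneOn v) (hv0 : ∀ x, 0 < x → 0 ≤ v x) :
    OperatorMonotoneOn (fun x => x * v x⁻¹) := by
  have e : (fun x : ℝ => x * v x⁻¹) = fun x => (fun y => v y / y) x⁻¹ := by
    funext x; simp [mul_comm]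
  rw [e, om_iff]
  intro n A B hA hB h
  rw [cfc_inv_comp hA (fun y => v y / y), cfc_inv_comp hB (fun y => v y / y)]
  exact hp hv hv0 hB.inv hA.inv (inv_anti hA hB h)

lemma om_mono {f : ℝ → ℝ} (hf : OperatorMonotoneOn f) {x y : ℝ} (hx : 0 < x) (hxy : x ≤ y) :
    f x ≤ f y := by
  have h := gen (n := Fin 1) hf (PosDef.one.smul hx) (PosDef.one.smul (hx.trans_le hxy))
    (by rw [← sub_smul]; exact PosSemidef.one.smul (sub_nonneg.2 hxy))
  rw [cfc_smul_one, cfc_smul_one] at h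
  have := h.diag_nonneg (i := 0)
  simp at this
  exact_mod_cast this

end FT

/-- if `f : (0,∞) → (0,∞)` is operator monotone, symmetric
(`f(x) = x·f(1/x)`), normalized (`f(1) = 1`) and regular (`f(0) := lim_{x→0⁺} f(x)` exists
and is nonzero), then `f̃(x) := ½[(x+1) − (x−1)²·f(0)/f(x)]` is operator monotone,
symmetric, normalized, and non-regular: `lim_{x→0⁺} f̃(x) = 0`. -/
theorem ftilde_operatorMonotone_symm_norm_nonregular
    (f : ℝ → ℝ) (hfpos : ∀ x : ℝ, 0 < x → 0 < f x)
    (hmono : OperatorMonotoneOn f)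
    (hsymm : ∀ x : ℝ, 0 < x → f x = x * f (1 / x))
    (hnorm : f 1 = 1)
    (f0 : ℝ) (hlim : Filter.Tendsto f (nhdsWithin 0 (Set.Ioi 0)) (nhds f0))
    (hreg : f0 ≠ 0)
    (ft : ℝ → ℝ)
    (hft : ∀ x : ℝ, 0 < x → ft x = ((x + 1) - (x - 1) ^ 2 * f0 / f x) / 2) :
    OperatorMonotoneOn ft
      ∧ (∀ x : ℝ, 0 < x → ft x = x * ft (1 / x))
      ∧ ft 1 = 1
      ∧ Filter.Tendsto ft (nhdsWithin 0 (Set.Ioi 0)) (nhds 0) := by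
  have hf0 : 0 ≤ f0 := ge_of_tendsto hlim (by
    filter_upwards [self_mem_nhdsWithin] with x hx using (hfpos x hx).le)
  have hfge : ∀ x, 0 < x → f0 ≤ f x := fun x hx => le_of_tendsto hlim (by
    filter_upwards [Ioo_mem_nhdsGT hx] with y hy using FT.om_mono hmono hy.1 hy.2.le)
  have ha := FT.om_neg_inv hmono hfpos
  have hb : OperatorMonotoneOn (fun x => x / f x) := by
    refine FT.om_congr (FT.om_flip ha) fun x hx => ?_
    have h1 := hfpos x⁻¹ (inv_pos.2 hx)
    rw [hsymm x hx, one_div]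
    field_simp
  have hv : OperatorMonotoneOn (fun x => 1 + f0 * (x / f x + -(f x)⁻¹)) :=
    FT.om_add (FT.om_const 1) (FT.om_smul (FT.om_add hb ha) hf0)
  have hv0 : ∀ x : ℝ, 0 < x → 0 ≤ 1 + f0 * (x / f x + -(f x)⁻¹) := by
    intro x hx
    have h1 := hfpos x hx
    have h2 := hfge x hx
    have e : 1 + f0 * (x / f x + -(f x)⁻¹) = (f x - f0 + f0 * x) / f x := by
      field_simp; ring
    rw [e]
    apply div_nonneg _ h1.le
    nlinarith [mul_nonneg hf0 hx.le]
  have hw := FT.om_transpose hv hv0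
  refine ⟨?_, ?_, ?_, ?_⟩
  · refine FT.om_congr (FT.om_smul (FT.om_add hv hw) (by norm_num : (0 : ℝ) ≤ 1 / 2)) fun x hx => ?_
    have h1 := hfpos x⁻¹ (inv_pos.2 hx)
    rw [hft x hx, hsymm x hx, one_div]
    field_simp
    ring
  · intro x hx
    have h1 := hfpos (1 / x) (one_div_pos.2 hx)
    rw [hft x hx, hft (1 / x) (one_div_pos.2 hx), hsymm x hx]
    field_simp
    ring
  · rw [hft 1 one_pos, hnorm]; norm_num
  · have hx : Filter.Tendsto (fun x : ℝ => x) (nhdsWithin 0 (Set.Ioi 0)) (nhds 0) :=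
      Filter.tendsto_id.mono_left nhdsWithin_le_nhds
    have h := ((hx.add_const 1).sub ((((hx.sub_const 1).pow 2).mul_const f0).div hlim hreg)).div_const 2
    have e : ((0 + 1) - (0 - 1) ^ 2 * f0 / f0) / 2 = (0 : ℝ) := by field_simp; norm_num
    rw [e] at h
    refine h.congr' ?_
    filter_upwards [self_mem_nhdsWithin] with x hx
    exact (hft x hx).symm
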